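/- (Hardness near the Nashian regime, negative side.) For every ε ∈ (0,1) there exists n₀ ∈ ℕ such that for every n ≥ n₀, every real p with −ε/4 ≤ p < 0 and |p| ≥ (4/ε) · log(log n)/log n, and every deterministic online algorithm A for n agents, there exists an instance v with unit monopolist utilities, in which for every item k there is some w_k ≥ 0 with v k a ∈ {0, w_k} for all agents a, such that OPT_p(v) ≥ n^{(1−ε)·|p|} · ALG_{A,p}(v). -/

import Mathlib

open Real

/-!
Write `q = |p|`. The adversary uses a two-stage instance with a parameter `f = s / n`, where
`s = ⌈n ^ (1 - (1 - 3ε/4) q)⌉`. The first item is worth `1 - f` to everybody. After seeing how it is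
split, the adversary takes a set `S` of `s` agents who together received at most the share `s / n`
of it. Each agent outside `S` then gets a private item of value `f`, while the agents of `S` jointly
value `s` further items, at `1 / n` each.

The agents of `S` end up with average utility at most `2 / n`, so by convexity of `u ↦ u ^ (-q)` the
mean of `u ^ (-q)` is at least `f (n / 2) ^ q`. In hindsight the first item can be split inside `S`
only, which gives at least `1 / (2 s)` to the agents of `S` and `f` to all others, hence a mean of
at most `f ^ (-q) + f (2 s) ^ q`. The choice of `s` makes the quotient of these two quantities at
least `n ^ ((1 - ε) q ^ 2)` (`key_ineq`); the point is that `1 ≤ q f ^ (1 + 2 q) n ^ q`, which makes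
`f ^ (-q)` so small next to `f (2 s) ^ q` that it costs only a factor `1 + q ≤ exp q`. Both that
inequality and the absorption of constants use `n ^ (ε q / 4) ≥ log n` (`choose_param`), which is
the assumed lower bound on `|p|`.
-/

/-- The `p`-mean welfare of a utility profile, taken to be `0` when `p < 0`
and some utility is zero. -/
noncomputable def pMeanWelfare (n : ℕ) (p : ℝ) (u : Fin n → ℝ) : ℝ :=
  if p < 0 ∧ ∃ a, u a = 0 then 0
  else ((1 / (n : ℝ)) * ∑ a, u a ^ p) ^ (1 / p)

/-- The optimal `p`-mean welfare over all feasible (fractional) allocations. -/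
noncomputable def OPTwelfare (n m : ℕ) (p : ℝ) (v : Fin m → Fin n → ℝ) : ℝ :=
  sSup { w : ℝ | ∃ y : Fin m → Fin n → ℝ,
    (∀ k a, 0 ≤ y k a) ∧ (∀ k, ∑ a, y k a ≤ 1) ∧
    w = pMeanWelfare n p (fun a => ∑ k, v k a * y k a) }

/-- The utilities produced by a deterministic online algorithm `A` on instance `v`:
item `k` is allocated according to `A k` applied to the value history of items `0,…,k`. -/
noncomputable def onlineUtilities (n m : ℕ)
    (A : (k : ℕ) → (Fin (k + 1) → Fin n → ℝ) → (Fin n → ℝ))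
    (v : Fin m → Fin n → ℝ) : Fin n → ℝ :=
  fun a => ∑ k : Fin m, v k a *
    A k.1 (fun i : Fin (k.1 + 1) => v (Fin.castLE k.isLt i)) a

/-- The `p`-mean welfare achieved by the online algorithm `A` on instance `v`. -/
noncomputable def ALGwelfare (n m : ℕ) (p : ℝ)
    (A : (k : ℕ) → (Fin (k + 1) → Fin n → ℝ) → (Fin n → ℝ))
    (v : Fin m → Fin n → ℝ) : ℝ :=
  pMeanWelfare n p (onlineUtilities n m A v)

/-! ### Feasible welfare values -/

lemma pMeanWelfare_nonneg (n : ℕ) (p : ℝ) (u : Fin n → ℝ) (hu : ∀ a, 0 ≤ u a) :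
    0 ≤ pMeanWelfare n p u := by
  unfold pMeanWelfare
  split_ifs
  · exact le_rfl
  · have : 0 ≤ ∑ a, u a ^ p := Finset.sum_nonneg fun a _ => Real.rpow_nonneg (hu a) _
    positivity

lemma pMeanWelfare_le_one (n : ℕ) (hn : 0 < n) (p : ℝ) (hp : p < 0) (u : Fin n → ℝ)
    (hu : ∀ a, 0 ≤ u a) (hu1 : ∀ a, u a ≤ 1) : pMeanWelfare n p u ≤ 1 := by
  unfold pMeanWelfare
  split_ifs with h
  · exact zero_le_one
  · have hpos : ∀ a, 0 < u a := fun a =>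
      lt_of_le_of_ne (hu a) fun h0 => h ⟨hp, a, h0.symm⟩
    have h1 : (n : ℝ) ≤ ∑ a, u a ^ p := by
      have : ∑ _a : Fin n, (1 : ℝ) ≤ ∑ a, u a ^ p := Finset.sum_le_sum fun a _ =>
        Real.one_le_rpow_of_pos_of_le_one_of_nonpos (hpos a) (hu1 a) hp.le
      simpa using this
    have hn' : (0 : ℝ) < n := by exact_mod_cast hn
    apply Real.rpow_le_one_of_one_le_of_nonpos
    · rw [one_div, inv_mul_eq_div, le_div_iff₀ hn']
      linarith
    · exact (one_div_neg.mpr hp).le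

lemma le_one_of_sum_le_one {n : ℕ} {x : Fin n → ℝ} (h0 : ∀ a, 0 ≤ x a) (h : ∑ a, x a ≤ 1)
    (a : Fin n) : x a ≤ 1 :=
  (Finset.single_le_sum (fun b _ => h0 b) (Finset.mem_univ a)).trans h

lemma le_OPTwelfare (n m : ℕ) (hn : 0 < n) (p : ℝ) (hp : p < 0) (v : Fin m → Fin n → ℝ)
    (hv : ∀ k a, 0 ≤ v k a) (hv1 : ∀ a, ∑ k, v k a = 1)
    (y : Fin m → Fin n → ℝ) (hy : ∀ k a, 0 ≤ y k a) (hy1 : ∀ k, ∑ a, y k a ≤ 1) :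
    pMeanWelfare n p (fun a => ∑ k, v k a * y k a) ≤ OPTwelfare n m p v := by
  apply le_csSup
  · refine ⟨1, ?_⟩
    rintro w ⟨z, hz, hz1, rfl⟩
    apply pMeanWelfare_le_one n hn p hp
    · exact fun a => Finset.sum_nonneg fun k _ => mul_nonneg (hv k a) (hz k a)
    · intro a
      rw [← hv1 a]
      exact Finset.sum_le_sum fun k _ =>
        mul_le_of_le_one_right (hv k a) (le_one_of_sum_le_one (hz k) (hz1 k) a)
  · exact ⟨y, hy, hy1, rfl⟩

/-! ### Averaging and convexity -/

/-- Some set of any prescribed size has average at most `c`, if the whole has. -/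
lemma exists_low_subset (n : ℕ) (x : Fin n → ℝ) (c : ℝ) (hx : ∑ a, x a ≤ c * n) :
    ∀ k ≤ n, ∃ S : Finset (Fin n), S.card = n - k ∧ ∑ a ∈ S, x a ≤ c * (n - k : ℕ) := by
  intro k
  induction k with
  | zero => intro _; exact ⟨Finset.univ, by simp, by simpa using hx⟩
  | succ k ih =>
    intro hk
    obtain ⟨S, hS, hsum⟩ := ih (by omega)
    have hcast : ((n - k : ℕ) : ℝ) = ((n - (k + 1) : ℕ) : ℝ) + 1 := by
      have : n - k = (n - (k + 1)) + 1 := by omega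
      exact_mod_cast this
    by_cases h : ∃ a ∈ S, c ≤ x a
    · obtain ⟨a, ha, hca⟩ := h
      refine ⟨S.erase a, by rw [Finset.card_erase_of_mem ha, hS]; omega, ?_⟩
      have := Finset.add_sum_erase S x ha
      rw [hcast] at hsum
      linarith
    · push Not at h
      have hne : S.Nonempty := Finset.card_pos.mp (by omega)
      obtain ⟨a, ha⟩ := hne
      have hcard : (S.erase a).card = n - (k + 1) := by
        rw [Finset.card_erase_of_mem ha, hS]; omega
      refine ⟨S.erase a, hcard, ?_⟩
      have : ∑ b ∈ S.erase a, x b ≤ ∑ _b ∈ S.erase a, c :=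
        Finset.sum_le_sum fun b hb => (h b (Finset.mem_of_mem_erase hb)).le
      rw [Finset.sum_const, hcard, nsmul_eq_mul] at this
      linarith

/-- Jensen's inequality for `u ↦ u ^ (-q)`, with an upper bound `c` in place of the average. -/
lemma card_mul_le_sum_rpow {ι : Type*} (S : Finset ι) (u : ι → ℝ) (c q : ℝ) (hc : 0 < c)
    (hq : 0 < q) (hu : ∀ a ∈ S, 0 < u a) (hs : ∑ a ∈ S, u a ≤ c * S.card) :
    S.card * c ^ (-q) ≤ ∑ a ∈ S, u a ^ (-q) := by
  have hpt : ∀ a ∈ S, c ^ (-q) * (1 + q - q / c * u a) ≤ u a ^ (-q) := by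
    intro a ha
    have hua := hu a ha
    have h1 : u a ^ (-q) = c ^ (-q) * (u a / c) ^ (-q) := by
      rw [← Real.mul_rpow hc.le (by positivity), mul_div_cancel₀ _ hc.ne']
    rw [h1]
    gcongr
    have h2 : 0 < u a / c := by positivity
    rw [Real.rpow_def_of_pos h2]
    have h3 := Real.add_one_le_exp (Real.log (u a / c) * -q)
    have h4 := Real.log_le_sub_one_of_pos h2
    have h5 : q / c * u a = q * (u a / c) := by ring
    rw [h5]
    nlinarith
  refine le_trans ?_ (Finset.sum_le_sum hpt)
  rw [← Finset.mul_sum, Finset.sum_sub_distrib, ← Finset.mul_sum, Finset.sum_const, nsmul_eq_mul,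
    mul_comm]
  gcongr
  have : q / c * ∑ a ∈ S, u a ≤ q / c * (c * S.card) := by gcongr
  have h6 : q / c * (c * S.card) = q * S.card := by field_simp
  linarith

/-! ### The numerical estimates -/

/-- The comparison of the two means of `u ^ (-q)`: the left side bounds the optimum's mean (times
`K ^ q`), the right side the algorithm's. -/
lemma key_ineq (n q K f : ℝ) (hn : 0 < n) (hq : 0 < q) (hK : 0 < K) (hf : 0 < f)
    (hKf : K * (4 * Real.exp 1 * f) ≤ 1) (h : 1 ≤ q * (f ^ (1 + 2 * q) * n ^ q)) :
    K ^ q * (f ^ (-q) + f * (2 * (f * n)) ^ q) ≤ f * (2 / n) ^ (-q) := by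
  have e1 : (2 * (f * n)) ^ q = 2 ^ q * (f ^ q * n ^ q) := by
    rw [Real.mul_rpow (by positivity) (by positivity), Real.mul_rpow hf.le hn.le]
  have e2 : (2 / n) ^ (-q) = n ^ q / 2 ^ q := by
    rw [Real.rpow_neg (by positivity), Real.div_rpow (by positivity) hn.le, inv_div]
  have e3 : f ^ (1 + 2 * q) = f * (f ^ q) ^ 2 := by
    rw [Real.rpow_add hf, Real.rpow_one, two_mul, Real.rpow_add hf, sq]
  have e4 : K ^ q * (4 ^ q * Real.exp q * f ^ q) ≤ 1 := by
    have := Real.rpow_le_one (by positivity) hKf hq.le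
    rwa [Real.mul_rpow hK.le (by positivity), Real.mul_rpow (by positivity) hf.le,
      Real.mul_rpow (by positivity) (by positivity), Real.exp_one_rpow] at this
  have e5 : (4 : ℝ) ^ q = 2 ^ q * 2 ^ q := by
    rw [← Real.mul_rpow (by norm_num) (by norm_num)]; norm_num
  have e6 : 1 ≤ (2 : ℝ) ^ q := Real.one_le_rpow (by norm_num) hq.le
  have e7 : q + 1 ≤ Real.exp q := Real.add_one_le_exp q
  rw [e1, e2, Real.rpow_neg hf.le]
  rw [e3] at h
  rw [e5] at e4
  have hF : 0 < f ^ q := by positivity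
  have hN : 0 < n ^ q := by positivity
  have hKq : 0 < K ^ q := by positivity
  generalize f ^ q = F at *
  generalize n ^ q = N at *
  generalize K ^ q = k at *
  generalize (2 : ℝ) ^ q = t at *
  generalize Real.exp q = E at *
  have ht : 0 < t := by linarith
  have hE : 0 < E := by linarith
  -- the first summand is at most `q` times the second
  have g1 : F⁻¹ ≤ q * (f * (t * (F * N))) := by
    rw [inv_le_iff_one_le_mul₀ hF]
    have : 1 * (q * (f * F ^ 2 * N)) ≤ t * (q * (f * F ^ 2 * N)) := by gcongr
    linarith
  have g2 : k ≤ 1 / (t * t * E * F) := by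
    rw [le_div_iff₀ (by positivity)]; exact e4
  calc k * (F⁻¹ + f * (t * (F * N)))
      ≤ k * (E * (f * (t * (F * N)))) := by
        have : (q + 1) * (f * (t * (F * N))) ≤ E * (f * (t * (F * N))) := by gcongr
        gcongr
        linarith
    _ ≤ 1 / (t * t * E * F) * (E * (f * (t * (F * N)))) := by gcongr
    _ = f * (N / t) := by field_simp

/-- A size `s` of the adversarial set meeting the two requirements of `key_ineq` with `f = s / n` and
`K = n ^ ((1 - ε) q)`. -/
lemma choose_param (ε q : ℝ) (n : ℕ) (hε : 0 < ε) (hε1 : ε < 1) (hq : 0 < q) (hqε : q ≤ ε / 4)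
    (hn : Real.exp 32 ≤ n)
    (h : (4 / ε) * (Real.log (Real.log n) / Real.log n) ≤ q) :
    ∃ s : ℕ, 0 < s ∧ 2 * s ≤ n ∧
      (n : ℝ) ^ ((1 - ε) * q) * (4 * Real.exp 1 * (s / n : ℝ)) ≤ 1 ∧
      1 ≤ q * ((s / n : ℝ) ^ (1 + 2 * q) * (n : ℝ) ^ q) := by
  have hn0 : (0 : ℝ) < n := (Real.exp_pos _).trans_le hn
  have hn1 : (1 : ℝ) ≤ n := (Real.one_le_exp (by norm_num)).trans hn
  have hl : 32 ≤ Real.log n := (Real.le_log_iff_exp_le hn0).mpr hn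
  have he : Real.exp 1 < 3 := Real.exp_one_lt_three
  have hll : 1 ≤ Real.log (Real.log n) :=
    (Real.le_log_iff_exp_le (by linarith)).mpr (by linarith)
  have hmain : Real.log (Real.log n) ≤ Real.log n * (ε / 4 * q) := by
    rw [← mul_div_assoc, div_le_iff₀ (by linarith)] at h
    have : ε / 4 * (4 / ε * Real.log (Real.log n)) ≤ ε / 4 * (q * Real.log n) := by gcongr
    have e : ε / 4 * (4 / ε * Real.log (Real.log n)) = Real.log (Real.log n) := by
      field_simp
    linarith
  have hpow : Real.log n ≤ (n : ℝ) ^ (ε / 4 * q) := by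
    rw [Real.rpow_def_of_pos hn0]
    calc Real.log n = Real.exp (Real.log (Real.log n)) := (Real.exp_log (by linarith)).symm
      _ ≤ _ := Real.exp_le_exp.mpr hmain
  have hqlog : 1 ≤ q * Real.log n := by
    have : Real.log n * (ε / 4 * q) ≤ Real.log n * (1 * q) := by
      gcongr; linarith
    linarith
  set g : ℝ := (n : ℝ) ^ (-((1 - 3 * ε / 4) * q)) with hg
  have hg0 : 0 < g := by positivity
  have hng : 1 ≤ n * g := by
    have : n * g = (n : ℝ) ^ (1 + -((1 - 3 * ε / 4) * q)) := by
      rw [Real.rpow_add hn0, Real.rpow_one]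
    rw [this]
    apply Real.one_le_rpow hn1
    nlinarith
  have hs1 : n * g ≤ (⌈n * g⌉₊ : ℝ) := Nat.le_ceil _
  have hs2 : (⌈n * g⌉₊ : ℝ) ≤ 2 * (n * g) := by
    have := Nat.ceil_lt_add_one (a := n * g) (by positivity)
    linarith
  set s := ⌈n * g⌉₊
  have hfg : g ≤ (s / n : ℝ) := by rw [le_div_iff₀ hn0]; linarith
  have hfg2 : (s / n : ℝ) ≤ 2 * g := by rw [div_le_iff₀ hn0]; linarith
  have hf0 : 0 < (s / n : ℝ) := hg0.trans_le hfg
  have hK : (n : ℝ) ^ ((1 - ε) * q) * (4 * Real.exp 1 * (s / n : ℝ)) ≤ 1 := by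
    have e1 : (n : ℝ) ^ ((1 - ε) * q) * g * (n : ℝ) ^ (ε / 4 * q) = 1 := by
      rw [hg, ← Real.rpow_add hn0, ← Real.rpow_add hn0, ← Real.rpow_zero (n : ℝ)]
      congr 1; ring
    have hKg : 0 < (n : ℝ) ^ ((1 - ε) * q) * g := by positivity
    calc (n : ℝ) ^ ((1 - ε) * q) * (4 * Real.exp 1 * (s / n : ℝ))
        ≤ (n : ℝ) ^ ((1 - ε) * q) * (4 * Real.exp 1 * (2 * g)) := by gcongr
      _ = ((n : ℝ) ^ ((1 - ε) * q) * g) * (8 * Real.exp 1) := by ring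
      _ ≤ ((n : ℝ) ^ ((1 - ε) * q) * g) * (n : ℝ) ^ (ε / 4 * q) := by
        gcongr; linarith
      _ = 1 := e1
  refine ⟨s, ?_, ?_, hK, ?_⟩
  · have : (0 : ℝ) < s := by linarith
    exact_mod_cast this
  · have h1 : 1 ≤ (n : ℝ) ^ ((1 - ε) * q) :=
      Real.one_le_rpow hn1 (mul_nonneg (by linarith) hq.le)
    have h2 : 1 ≤ Real.exp 1 := Real.one_le_exp zero_le_one
    have h3 : 4 * (s / n : ℝ) ≤ 1 := by
      refine le_trans ?_ hK
      calc 4 * (s / n : ℝ) = 1 * (4 * 1 * (s / n : ℝ)) := by ring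
        _ ≤ _ := by gcongr
    have h4 : 4 * (s : ℝ) ≤ n := by
      rw [← mul_div_assoc, div_le_one hn0] at h3; exact h3
    have : 4 * s ≤ n := by exact_mod_cast h4
    omega
  · have h1 : (n : ℝ) ^ (ε / 4 * q) ≤ g ^ (1 + 2 * q) * (n : ℝ) ^ q := by
      rw [hg, ← Real.rpow_mul hn0.le, ← Real.rpow_add hn0]
      apply Real.rpow_le_rpow_of_exponent_le hn1
      have : ε / 4 ≤ -((1 - 3 * ε / 4)) * (1 + 2 * q) + 1 := by nlinarith
      nlinarith
    calc 1 ≤ q * Real.log n := hqlog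
      _ ≤ q * (g ^ (1 + 2 * q) * (n : ℝ) ^ q) := by gcongr; exact hpow.trans h1
      _ ≤ _ := by gcongr

/-! ### The adversarial instance -/

/-- The instance with `n + 1` items built from a set `S` of agents: item `0` is worth `1 - |S|/n`
to everybody; item `i + 1` is worth `1/n` to all of `S` if `i ∈ S`, and otherwise it is private to
agent `i`, with value `|S|/n`. -/
noncomputable def hardInstance (n : ℕ) (S : Finset (Fin n)) : Fin (n + 1) → Fin n → ℝ :=
  Fin.cons (fun _ => 1 - (S.card / n : ℝ)) fun i a =>
    if i ∈ S then (if a ∈ S then 1 / (n : ℝ) else 0) else (if a = i then (S.card / n : ℝ) else 0)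

lemma hardInstance_nonneg (n : ℕ) (S : Finset (Fin n)) (hS : (S.card / n : ℝ) ≤ 1)
    (k : Fin (n + 1)) (a : Fin n) : 0 ≤ hardInstance n S k a := by
  refine Fin.cases ?_ (fun i => ?_) k
  · simpa [hardInstance] using hS
  · simp only [hardInstance, Fin.cons_succ]
    split_ifs <;> positivity

lemma hardInstance_sum (n : ℕ) (S : Finset (Fin n)) (a : Fin n) :
    ∑ k, hardInstance n S k a = 1 := by
  rw [Fin.sum_univ_succ]
  simp only [hardInstance, Fin.cons_zero, Fin.cons_succ]
  suffices h : ∑ i, (if i ∈ S then (if a ∈ S then 1 / (n : ℝ) else 0)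
      else (if a = i then (S.card / n : ℝ) else 0)) = S.card / n by rw [h]; ring
  by_cases ha : a ∈ S
  · have : ∀ i, (if i ∈ S then (if a ∈ S then 1 / (n : ℝ) else 0)
      else (if a = i then (S.card / n : ℝ) else 0)) = if i ∈ S then 1 / (n : ℝ) else 0 := by
      intro i
      by_cases hi : i ∈ S
      · simp [hi, ha]
      · have : a ≠ i := fun h => hi (h ▸ ha)
        simp [hi, this]
    simp only [this, Finset.sum_ite_mem, Finset.univ_inter, Finset.sum_const, nsmul_eq_mul]
    ring
  · have : ∀ i, (if i ∈ S then (if a ∈ S then 1 / (n : ℝ) else 0)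
      else (if a = i then (S.card / n : ℝ) else 0)) = if a = i then (S.card / n : ℝ) else 0 := by
      intro i
      by_cases hi : i ∈ S
      · have : a ≠ i := fun h => ha (h ▸ hi)
        simp [hi, ha, this]
      · simp [hi]
    rw [Finset.sum_congr rfl fun i _ => this i]
    simp

lemma hardInstance_binary (n : ℕ) (S : Finset (Fin n)) (hS : (S.card / n : ℝ) ≤ 1)
    (k : Fin (n + 1)) :
    ∃ w : ℝ, 0 ≤ w ∧ ∀ a, hardInstance n S k a = 0 ∨ hardInstance n S k a = w := by
  refine Fin.cases ?_ (fun i => ?_) k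
  · exact ⟨1 - S.card / n, by linarith, fun a => Or.inr rfl⟩
  · by_cases hi : i ∈ S
    · refine ⟨1 / n, by positivity, fun a => ?_⟩
      simp only [hardInstance, Fin.cons_succ, hi, if_true]
      split_ifs <;> simp
    · refine ⟨S.card / n, by positivity, fun a => ?_⟩
      simp only [hardInstance, Fin.cons_succ, hi, if_false]
      split_ifs <;> simp

/-- In hindsight the first item is split within `S` only, and item `i + 1` goes to agent `i`. -/
lemma hardInstance_opt (n : ℕ) (S : Finset (Fin n)) (hS : 0 < S.card) (hS2 : 2 * S.card ≤ n)
    (q : ℝ) (hq : 0 < q) :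
    (((S.card / n : ℝ)) ^ (-q) + (S.card / n : ℝ) * (2 * S.card : ℝ) ^ q) ^ (1 / -q)
      ≤ OPTwelfare n (n + 1) (-q) (hardInstance n S) := by
  have hn : 0 < n := by omega
  have hn' : (0 : ℝ) < n := by exact_mod_cast hn
  have hs' : (0 : ℝ) < S.card := by exact_mod_cast hS
  have hf2 : (S.card / n : ℝ) ≤ 1 / 2 := by
    rw [div_le_iff₀ hn']
    have : (2 * S.card : ℝ) ≤ n := by exact_mod_cast hS2
    linarith
  set f : ℝ := S.card / n with hf
  have hf0 : 0 < f := by positivity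
  let y : Fin (n + 1) → Fin n → ℝ :=
    Fin.cons (fun a => if a ∈ S then 1 / (S.card : ℝ) else 0) fun i a => if a = i then 1 else 0
  have hy0 : ∀ k a, 0 ≤ y k a := by
    intro k a
    refine Fin.cases ?_ (fun i => ?_) k
    · simp only [y, Fin.cons_zero]; split_ifs <;> positivity
    · simp only [y, Fin.cons_succ]; split_ifs <;> positivity
  have hy1 : ∀ k, ∑ a, y k a ≤ 1 := by
    intro k
    refine Fin.cases ?_ (fun i => ?_) k
    · simp only [y, Fin.cons_zero, Finset.sum_ite_mem, Finset.univ_inter, Finset.sum_const,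
        nsmul_eq_mul]
      rw [mul_one_div_cancel hs'.ne']
    · simp [y, Fin.cons_succ]
  have hv0 := hardInstance_nonneg n S (by linarith)
  refine le_trans ?_ (le_OPTwelfare n (n + 1) hn (-q) (by linarith) (hardInstance n S) hv0
    (hardInstance_sum n S) y hy0 hy1)
  set u : Fin n → ℝ := fun a => ∑ k, hardInstance n S k a * y k a with hu
  have huS : ∀ a ∈ S, (2 * S.card : ℝ)⁻¹ ≤ u a := by
    intro a ha
    have h1 : hardInstance n S 0 a * y 0 a ≤ u a :=
      Finset.single_le_sum (f := fun k => hardInstance n S k a * y k a)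
        (fun k _ => mul_nonneg (hv0 k a) (hy0 k a)) (Finset.mem_univ 0)
    have h2 : hardInstance n S 0 a * y 0 a = (1 - f) * (S.card : ℝ)⁻¹ := by
      simp [hardInstance, y, ha, ← hf]
    rw [h2] at h1
    refine le_trans ?_ h1
    rw [mul_inv]
    gcongr
    linarith
  have huN : ∀ a, a ∉ S → f ≤ u a := by
    intro a ha
    have h1 : hardInstance n S a.succ a * y a.succ a ≤ u a :=
      Finset.single_le_sum (f := fun k => hardInstance n S k a * y k a)
        (fun k _ => mul_nonneg (hv0 k a) (hy0 k a)) (Finset.mem_univ a.succ)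
    have h2 : hardInstance n S a.succ a * y a.succ a = f := by
      simp [hardInstance, y, ha, ← hf]
    rwa [h2] at h1
  have hupos : ∀ a, 0 < u a := by
    intro a
    by_cases ha : a ∈ S
    · exact lt_of_lt_of_le (by positivity) (huS a ha)
    · exact lt_of_lt_of_le hf0 (huN a ha)
  unfold pMeanWelfare
  rw [if_neg (by rintro ⟨-, a, ha⟩; exact (hupos a).ne' ha)]
  have hsum : ∑ a, u a ^ (-q) ≤ n * f ^ (-q) + S.card * (2 * S.card : ℝ) ^ q := by
    have hpt : ∀ a, u a ^ (-q) ≤ f ^ (-q) + if a ∈ S then (2 * S.card : ℝ) ^ q else 0 := by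
      intro a
      have hfq : 0 < f ^ (-q) := by positivity
      by_cases ha : a ∈ S
      · have h1 := Real.rpow_le_rpow_of_nonpos (z := -q) (by positivity) (huS a ha) (by linarith)
        rw [Real.inv_rpow (by positivity), Real.rpow_neg (x := 2 * (S.card : ℝ)) (by positivity),
          inv_inv] at h1
        simp only [ha, if_true]
        linarith
      · have h1 := Real.rpow_le_rpow_of_nonpos (z := -q) hf0 (huN a ha) (by linarith)
        simpa [ha] using h1
    refine (Finset.sum_le_sum fun a _ => hpt a).trans ?_
    simp [Finset.sum_add_distrib]
  have hupow : 0 < ∑ a, u a ^ (-q) :=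
    Finset.sum_pos (fun a _ => Real.rpow_pos_of_pos (hupos a) _)
      ⟨⟨0, hn⟩, Finset.mem_univ _⟩
  apply Real.rpow_le_rpow_of_nonpos
  · positivity
  · calc 1 / (n : ℝ) * ∑ a, u a ^ (-q)
        ≤ 1 / (n : ℝ) * (n * f ^ (-q) + S.card * (2 * S.card : ℝ) ^ q) := by gcongr
      _ = f ^ (-q) + f * (2 * S.card : ℝ) ^ q := by
        rw [hf]; field_simp
  · exact (one_div_neg.mpr (by linarith)).le

/-- If `S` received at most its proportional share of the first item, its agents have average
utility at most `2 / n`. -/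
lemma hardInstance_alg (n : ℕ) (S : Finset (Fin n)) (hS : 0 < S.card) (hS2 : 2 * S.card ≤ n)
    (q : ℝ) (hq : 0 < q)
    (A : (k : ℕ) → (Fin (k + 1) → Fin n → ℝ) → (Fin n → ℝ))
    (hA : ∀ k h, (∀ a, 0 ≤ A k h a) ∧ ∑ a, A k h a ≤ 1)
    (hlow : ∑ a ∈ S, A 0 (fun _ _ => 1 - (S.card / n : ℝ)) a ≤ 1 / n * S.card) :
    ALGwelfare n (n + 1) (-q) A (hardInstance n S)
      ≤ ((S.card / n : ℝ) * (2 / n : ℝ) ^ (-q)) ^ (1 / -q) := by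
  have hn : 0 < n := by omega
  have hn' : (0 : ℝ) < n := by exact_mod_cast hn
  have hs' : (0 : ℝ) < S.card := by exact_mod_cast hS
  have hf2 : (S.card / n : ℝ) ≤ 1 := by
    rw [div_le_one hn']
    exact_mod_cast (by omega : S.card ≤ n)
  have hv0 := hardInstance_nonneg n S hf2
  unfold ALGwelfare pMeanWelfare
  split_ifs with h
  · positivity
  set u := onlineUtilities n (n + 1) A (hardInstance n S) with hu
  have hu0 : ∀ a, 0 ≤ u a := fun a => Finset.sum_nonneg fun k _ =>
    mul_nonneg (hv0 k a) ((hA _ _).1 a)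
  have hupos : ∀ a, 0 < u a := fun a =>
    lt_of_le_of_ne (hu0 a) fun h0 => h ⟨by linarith, a, h0.symm⟩
  have hsum : ∑ a ∈ S, u a ≤ 2 / n * S.card := by
    simp only [hu, onlineUtilities]
    rw [Finset.sum_comm, Fin.sum_univ_succ]
    have h0 : ∑ a ∈ S, hardInstance n S 0 a * A (0 : Fin (n + 1)).1
        (fun i => hardInstance n S (Fin.castLE (0 : Fin (n + 1)).isLt i)) a
        ≤ 1 / n * S.card := by
      have hhist : (fun i : Fin ((0 : Fin (n + 1)).1 + 1) =>
          hardInstance n S (Fin.castLE (0 : Fin (n + 1)).isLt i))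
          = fun _ _ => 1 - (S.card / n : ℝ) := by
        funext i a
        have : Fin.castLE (0 : Fin (n + 1)).isLt i = 0 := by
          ext
          have hi : i.1 < 1 := i.isLt
          change i.1 = 0
          omega
        rw [this]
        rfl
      rw [hhist]
      refine le_trans (Finset.sum_le_sum fun a _ => ?_) hlow
      refine mul_le_of_le_one_left ((hA _ _).1 a) ?_
      change 1 - (S.card / n : ℝ) ≤ 1
      have : (0 : ℝ) ≤ S.card / n := by positivity
      linarith
    have h1 : ∀ i : Fin n, ∑ a ∈ S, hardInstance n S i.succ a * A i.succ.1
        (fun j => hardInstance n S (Fin.castLE i.succ.isLt j)) a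
        ≤ if i ∈ S then 1 / (n : ℝ) else 0 := by
      intro i
      generalize (fun j => hardInstance n S (Fin.castLE i.succ.isLt j)) = hist
      by_cases hi : i ∈ S
      · rw [if_pos hi]
        have hle : ∑ a ∈ S, A i.succ.1 hist a ≤ 1 :=
          (Finset.sum_le_univ_sum_of_nonneg (hA _ _).1).trans (hA _ _).2
        have : ∑ a ∈ S, hardInstance n S i.succ a * A i.succ.1 hist a
            = 1 / n * ∑ a ∈ S, A i.succ.1 hist a := by
          rw [Finset.mul_sum]
          refine Finset.sum_congr rfl fun a ha => ?_
          simp [hardInstance, hi, ha]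
        rw [this]
        exact mul_le_of_le_one_right (by positivity) hle
      · rw [if_neg hi]
        refine (Finset.sum_eq_zero fun a ha => ?_).le
        have : a ≠ i := fun h => hi (h ▸ ha)
        simp [hardInstance, hi, this]
    have h2 := Finset.sum_le_sum fun (i : Fin n) (_ : i ∈ Finset.univ) => h1 i
    rw [Finset.sum_ite_mem, Finset.univ_inter, Finset.sum_const, nsmul_eq_mul] at h2
    have h3 : (2 : ℝ) / n * S.card = 1 / n * S.card + S.card * (1 / n) := by ring
    rw [h3]
    exact add_le_add h0 h2
  have hJ := card_mul_le_sum_rpow S u (2 / n) q (by positivity) hq (fun a _ => hupos a) hsum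
  have hJ2 : ∑ a ∈ S, u a ^ (-q) ≤ ∑ a, u a ^ (-q) :=
    Finset.sum_le_univ_sum_of_nonneg fun a => Real.rpow_nonneg (hu0 a) _
  apply Real.rpow_le_rpow_of_nonpos
  · positivity
  · calc (S.card / n : ℝ) * (2 / n : ℝ) ^ (-q) = 1 / n * (S.card * (2 / n : ℝ) ^ (-q)) := by ring
      _ ≤ 1 / n * ∑ a, u a ^ (-q) := by gcongr; exact hJ.trans hJ2
  · exact (one_div_neg.mpr (by linarith)).le

theorem stmt_16 :
    ∀ ε : ℝ, 0 < ε → ε < 1 →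
    ∃ n₀ : ℕ, ∀ n : ℕ, n₀ ≤ n →
    ∀ p : ℝ, -ε / 4 ≤ p → p < 0 →
      (4 / ε) * (Real.log (Real.log n) / Real.log n) ≤ |p| →
    ∀ A : (k : ℕ) → (Fin (k + 1) → Fin n → ℝ) → (Fin n → ℝ),
      (∀ k h, (∀ a, 0 ≤ A k h a) ∧ ∑ a, A k h a ≤ 1) →
      ∃ m : ℕ, ∃ v : Fin m → Fin n → ℝ,
        (∀ k a, 0 ≤ v k a) ∧ (∀ a, ∑ k, v k a = 1) ∧
        (∀ k, ∃ w : ℝ, 0 ≤ w ∧ ∀ a, v k a = 0 ∨ v k a = w) ∧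
        OPTwelfare n m p v ≥
          (n : ℝ) ^ ((1 - ε) * |p|) * ALGwelfare n m p A v := by
  intro ε hε hε1
  refine ⟨⌈Real.exp 32⌉₊, fun n hn p hp1 hp2 hp3 A hA => ?_⟩
  have hnexp : Real.exp 32 ≤ n := Nat.ceil_le.mp hn
  obtain ⟨q, rfl⟩ : ∃ q, p = -q := ⟨-p, by ring⟩
  have hq : 0 < q := by linarith
  have habs : |-q| = q := by rw [abs_neg, abs_of_pos hq]
  rw [habs] at hp3 ⊢
  obtain ⟨s, hs0, hs2, hK, hf⟩ :=
    choose_param ε q n hε hε1 hq (by linarith) hnexp hp3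
  have hn0 : (0 : ℝ) < n := (Real.exp_pos _).trans_le hnexp
  have hs' : (0 : ℝ) < s := by exact_mod_cast hs0
  obtain ⟨S, hcard, hlow⟩ := exists_low_subset n (A 0 (fun _ _ => 1 - (s / n : ℝ))) (1 / n)
    (by rw [one_div_mul_cancel hn0.ne']; exact (hA _ _).2) (n - s) (Nat.sub_le _ _)
  rw [Nat.sub_sub_self (by omega)] at hcard hlow
  subst hcard
  have hle1 : (S.card / n : ℝ) ≤ 1 := by
    rw [div_le_one hn0]
    exact_mod_cast (by omega : S.card ≤ n)
  refine ⟨n + 1, hardInstance n S, hardInstance_nonneg n S hle1, hardInstance_sum n S,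
    hardInstance_binary n S hle1, ?_⟩
  refine le_trans ?_ (hardInstance_opt n S hs0 hs2 q hq)
  refine le_trans (mul_le_mul_of_nonneg_left (hardInstance_alg n S hs0 hs2 q hq A hA hlow)
    (by positivity)) ?_
  set K : ℝ := (n : ℝ) ^ ((1 - ε) * q) with hKdef
  have hK0 : 0 < K := by positivity
  have hkey := key_ineq n q K (S.card / n) hn0 hq hK0 (by positivity) hK hf
  rw [div_mul_cancel₀ _ hn0.ne'] at hkey
  -- `hkey` is raised to the power `1 / -q < 0`, which turns `K ^ q` into `K⁻¹`
  have hpow := Real.rpow_le_rpow_of_nonpos (z := 1 / -q) (by positivity) hkey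
    (one_div_neg.mpr (by linarith)).le
  have hKinv : (K ^ q) ^ (1 / -q) = K⁻¹ := by
    rw [← Real.rpow_mul hK0.le, ← Real.rpow_neg_one]
    congr 1
    field_simp
  rw [Real.mul_rpow (x := K ^ q) (by positivity) (by positivity), hKinv, inv_mul_eq_div,
    le_div_iff₀ hK0] at hpow
  rw [mul_comm]
  exact hpow
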